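/- Fix an integer k ≥ 2 and a real α ≥ 0 (sub-exponential, polynomially decaying traffic rate). For each n ≥ 1, model the leaves of the depth-n rooted k-ary tree as functions from Fin n to Fin k with tree distance d(u,v) = 2(n − ℓ(u,v)), where ℓ(u,v) is the length of the longest common prefix, and take the traffic rate between leaves u and v to be (1 + d(u,v))^{−α}. Let P(n) = ( Σ_{(u,v): d(u,v)=2n} (1+d(u,v))^{−α} ) / ( Σ_{(u,v)} (1+d(u,v))^{−α} ), both sums over ordered pairs of leaves. Then P(n) → 1 − 1/k as n → ∞; in particular, polynomially decaying rate functions yield global traffic with asymptotic proportion 1 − 1/k through the root. -/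

import Mathlib

open Filter

/-- The length of the longest common prefix of two leaves of the depth-`n`
rooted `k`-ary tree (leaves modeled as functions `Fin n → Fin k`):
the largest `j ≤ n` such that `u i = v i` for all `i < j`. -/
def prefLen {n k : ℕ} (u v : Fin n → Fin k) : ℕ :=
  Nat.findGreatest (fun j => ∀ i : Fin n, (i : ℕ) < j → u i = v i) n

/-- The tree distance between two leaves of the depth-`n` rooted `k`-ary tree:
`d(u,v) = 2 (n - ℓ(u,v))`. -/
def treeDist {n k : ℕ} (u v : Fin n → Fin k) : ℕ :=
  2 * (n - prefLen u v)

theorem prefLen_cons_eq {n k : ℕ} (a : Fin k) (u v : Fin n → Fin k) :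
    prefLen (Fin.cons a u : Fin (n+1) → Fin k) (Fin.cons a v : Fin (n+1) → Fin k)
      = prefLen u v + 1 := by
  have h : prefLen u v = prefLen u v := rfl
  conv at h => lhs; unfold prefLen
  rw [Nat.findGreatest_eq_iff] at h
  obtain ⟨h1, h2, h3⟩ := h
  rw [prefLen, Nat.findGreatest_eq_iff]
  refine ⟨by omega, ?_, ?_⟩
  · intro _ i
    refine Fin.cases ?_ (fun j => ?_) i
    · simp
    · intro hj
      simp only [Fin.val_succ] at hj
      simp only [Fin.cons_succ]
      exact h2 (by omega) j (by omega)
  · intro m hm hm' hP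
    refine h3 (n := m - 1) (by omega) (by omega) (fun i hi => ?_)
    have := hP i.succ (by simp only [Fin.val_succ]; omega)
    simpa using this

theorem prefLen_cons_ne {n k : ℕ} (a b : Fin k) (hab : a ≠ b) (u v : Fin n → Fin k) :
    prefLen (Fin.cons a u : Fin (n+1) → Fin k) (Fin.cons b v : Fin (n+1) → Fin k) = 0 := by
  rw [prefLen, Nat.findGreatest_eq_iff]
  refine ⟨by omega, by simp, ?_⟩
  intro m hm _ hP
  have := hP 0 (by simpa using hm)
  exact hab (by simpa using this)

theorem treeDist_cons {n k : ℕ} (a b : Fin k) (u v : Fin n → Fin k) :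
    treeDist (Fin.cons a u : Fin (n+1) → Fin k) (Fin.cons b v : Fin (n+1) → Fin k)
      = if a = b then treeDist u v else 2 * (n + 1) := by
  split_ifs with h
  · subst h
    rw [treeDist, prefLen_cons_eq, treeDist]
    omega
  · rw [treeDist, prefLen_cons_ne a b h]
    omega

theorem treeDist_le {n k : ℕ} (u v : Fin n → Fin k) : treeDist u v ≤ 2 * n := by
  unfold treeDist; omega

theorem sum_rec {k n : ℕ} (f : ℕ → ℝ) :
    (∑ u : Fin (n+1) → Fin k, ∑ v : Fin (n+1) → Fin k, f (treeDist u v))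
      = k * (∑ u : Fin n → Fin k, ∑ v : Fin n → Fin k, f (treeDist u v))
        + k * (k - 1) * (k:ℝ) ^ (2 * n) * f (2 * (n + 1)) := by
  have e : ∀ g : (Fin (n+1) → Fin k) → ℝ, ∑ u, g u
      = ∑ a : Fin k, ∑ u : Fin n → Fin k, g (Fin.cons a u : Fin (n+1) → Fin k) := by
    intro g
    rw [← Fintype.sum_prod_type']
    exact (Fintype.sum_equiv (Fin.consEquiv (fun _ : Fin (n+1) => Fin k)) _ _
      (fun x => rfl)).symm
  rw [e]
  simp_rw [e, treeDist_cons]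
  have h1 : ∀ (a : Fin k) (u : Fin n → Fin k),
      (∑ b : Fin k, ∑ v : Fin n → Fin k, f (if a = b then treeDist u v else 2 * (n + 1)))
      = (∑ v : Fin n → Fin k, f (treeDist u v)) + (k - 1) * ((k:ℝ) ^ n * f (2 * (n + 1))) := by
    intro a u
    rw [← Finset.add_sum_erase _ _ (Finset.mem_univ a)]
    congr 1
    · simp
    · rw [Finset.sum_congr rfl (g := fun _ => (k:ℝ) ^ n * f (2 * (n + 1)))]
      · have : 1 ≤ k := by have := a.2; omega
        simp [Finset.card_erase_of_mem, Nat.cast_sub this]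
      · intro b hb
        have : a ≠ b := fun h => by simp [h] at hb
        simp [this]
  simp_rw [h1]
  simp [Finset.sum_add_distrib]
  ring

theorem tendsto_of_contr (x e : ℕ → ℝ) (q : ℝ) (hq0 : 0 ≤ q) (hq : q < 1) (hx : ∀ n, 0 ≤ x n)
    (he : Tendsto e atTop (nhds 0)) (h : ∀ᶠ n in atTop, x (n+1) ≤ q * x n + e n) :
    Tendsto x atTop (nhds 0) := by
  rw [tendsto_order]
  refine ⟨fun a ha => Eventually.of_forall fun n => lt_of_lt_of_le ha (hx n), fun a ha => ?_⟩
  have h2 : ∀ᶠ n in atTop, e n < (1 - q) * (a / 2) :=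
    he.eventually_lt_const (by have : 0 < 1 - q := by linarith
                               positivity)
  obtain ⟨N, hN⟩ := eventually_atTop.1 (h.and h2)
  have key : ∀ m, x (N + m) - a / 2 ≤ q ^ m * (x N - a / 2) := by
    intro m
    induction m with
    | zero => simp
    | succ m ih =>
      have h3 := hN (N + m) (by omega)
      have h4 := mul_le_mul_of_nonneg_left ih hq0
      rw [pow_succ', mul_assoc, ← add_assoc]
      linarith [h3.1, h3.2]
  have h5 : Tendsto (fun m : ℕ => q ^ m * (x N - a / 2)) atTop (nhds 0) := by
    simpa using (tendsto_pow_atTop_nhds_zero_of_lt_one hq0 hq).mul_const (x N - a / 2)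
  obtain ⟨M, hM⟩ := eventually_atTop.1 (h5.eventually_lt_const (half_pos ha))
  refine eventually_atTop.2 ⟨N + M, fun n hn => ?_⟩
  have h6 := key (n - N)
  have h7 := hM (n - N) (by omega)
  rw [show N + (n - N) = n by omega] at h6
  linarith

theorem ratio_tendsto (α : ℝ) :
    Tendsto (fun n : ℕ => (1 + ((2 * n : ℕ) : ℝ)) ^ (-α) / (1 + ((2 * (n+1) : ℕ) : ℝ)) ^ (-α))
      atTop (nhds 1) := by
  have h0 : Tendsto (fun n : ℕ => (1 + ((2 * n : ℕ) : ℝ)) / (1 + ((2 * (n+1) : ℕ) : ℝ)))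
      atTop (nhds 1) := by
    have : Tendsto (fun n : ℕ => 1 - 2 / (1 + ((2 * (n+1) : ℕ) : ℝ))) atTop (nhds (1 - 0)) := by
      refine tendsto_const_nhds.sub (Tendsto.const_div_atTop ?_ _)
      refine tendsto_atTop_add_const_left _ _ (tendsto_natCast_atTop_atTop.comp ?_)
      exact tendsto_atTop_mono (fun n => by simp only [id]; omega) tendsto_id
    rw [sub_zero] at this
    refine this.congr (fun n => ?_)
    have : (1 + ((2 * (n+1) : ℕ) : ℝ)) ≠ 0 := by positivity
    field_simp
    push_cast
    ring
  have h1 := h0.rpow_const (p := -α) (Or.inl one_ne_zero)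
  rw [Real.one_rpow] at h1
  refine h1.congr (fun n => ?_)
  rw [Real.div_rpow (by positivity) (by positivity)]

theorem root_traffic_proportion_polynomial_decay (k : ℕ) (hk : 2 ≤ k)
    (α : ℝ) (hα : 0 ≤ α) :
    Tendsto
      (fun n : ℕ =>
        (∑ u : Fin n → Fin k, ∑ v : Fin n → Fin k,
            if treeDist u v = 2 * n
              then (1 + (treeDist u v : ℝ)) ^ (-α) else 0) /
        (∑ u : Fin n → Fin k, ∑ v : Fin n → Fin k,
            (1 + (treeDist u v : ℝ)) ^ (-α)))
      atTop (nhds (1 - 1 / (k : ℝ))) := by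
  have hk2 : (2:ℝ) ≤ k := by exact_mod_cast hk
  have hk0 : (0:ℝ) < k := by linarith
  set S : ℕ → ℝ := fun n => ∑ u : Fin n → Fin k, ∑ v : Fin n → Fin k,
            (1 + (treeDist u v : ℝ)) ^ (-α) with hS
  set r : ℕ → ℝ := fun n => (1 + ((2 * n : ℕ) : ℝ)) ^ (-α) with hr
  have hrpos : ∀ n, 0 < r n := fun n => Real.rpow_pos_of_pos (by positivity) _
  have hSrec : ∀ n, S (n+1) = k * S n + k * (k - 1) * (k:ℝ) ^ (2 * n) * r (n+1) := fun n =>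
    sum_rec (fun d => (1 + (d : ℝ)) ^ (-α))
  have hN : ∀ n : ℕ, (∑ u : Fin (n+1) → Fin k, ∑ v : Fin (n+1) → Fin k,
            if treeDist u v = 2 * (n+1)
              then (1 + (treeDist u v : ℝ)) ^ (-α) else 0)
        = k * (k - 1) * (k:ℝ) ^ (2 * n) * r (n+1) := by
    intro n
    rw [sum_rec (fun d => if d = 2 * (n+1) then (1 + (d : ℝ)) ^ (-α) else 0)]
    have : ∀ u v : Fin n → Fin k, treeDist u v ≠ 2 * (n+1) := fun u v => by
      have := treeDist_le u v
      omega
    simp [this, hr]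
  set T : ℕ → ℝ := fun n => S n / ((k:ℝ) ^ (2 * n) * r n) with hT
  set ρ : ℕ → ℝ := fun n => r n / r (n+1) with hρ
  have hρ1 : Tendsto ρ atTop (nhds 1) := ratio_tendsto α
  have hTrec : ∀ n, T (n+1) - 1 = ρ n / k * (T n - 1) + (ρ n - 1) / k := by
    intro n
    simp only [hT, hρ, hSrec]
    have h1 := (hrpos n).ne'
    have h2 := (hrpos (n+1)).ne'
    rw [show 2 * (n+1) = 2 * n + 2 by ring, pow_add]
    field_simp
    ring
  have hT1 : Tendsto (fun n => |T n - 1|) atTop (nhds 0) := by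
    refine tendsto_of_contr _ (fun n => |(ρ n - 1) / k|) (3/4) (by norm_num) (by norm_num)
      (fun n => abs_nonneg _) ?_ ?_
    · have := ((hρ1.sub_const 1).div_const (k:ℝ)).abs
      simpa using this
    · filter_upwards [hρ1.eventually_lt_const (show (1:ℝ) < 3/2 by norm_num)] with n hn
      rw [hTrec]
      refine (abs_add_le _ _).trans ?_
      gcongr
      rw [abs_mul]
      gcongr
      have : 0 < ρ n := div_pos (hrpos _) (hrpos _)
      rw [abs_of_pos (by positivity), div_le_iff₀ hk0]
      linarith
  have hT2 : Tendsto T atTop (nhds 1) := by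
    have := (tendsto_zero_iff_abs_tendsto_zero _).2 hT1
    simpa using this.add_const 1
  rw [← tendsto_add_atTop_iff_nat 1]
  have h3 : Tendsto (fun n => (1 - 1 / (k:ℝ)) / T (n+1)) atTop (nhds ((1 - 1 / (k:ℝ)) / 1)) :=
    tendsto_const_nhds.div ((tendsto_add_atTop_iff_nat 1).2 hT2) one_ne_zero
  rw [div_one] at h3
  refine h3.congr (fun n => ?_)
  rw [hN]
  change _ = _ / S (n+1)
  simp only [hT]
  have h2 := (hrpos (n+1)).ne'
  rw [show 2 * (n+1) = 2 * n + 2 by ring, pow_add, div_div_eq_mul_div]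
  congr 1
  field_simp
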